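/- Propensity-independent generalization error bound (Theorem 1): suppose L > 0 and ℓ is L-Lipschitz in each argument, i.e., |ℓ(a, b) − ℓ(a', b)| ≤ L|a − a'| and |ℓ(a, b) − ℓ(a, b')| ≤ L|b − b'| for all reals. Let H be a nonempty, uniformly bounded class of real m×n matrices whose elements include the true rating matrix R ∈ H. Let P_unif be the uniform distribution on D (the MCAR mechanism) and let P_MNAR be any probability distribution on D (the MNAR mechanism). Let S_MCAR and S_MNAR be independent i.i.d. samples of size M ≥ 1 from P_unif and P_MNAR respectively, with empirical distributions P̂_MCAR and P̂_MNAR. Then for every δ ∈ (0, 1), with probability at least 1 − δ, for every R̂ ∈ H: L^ℓ_ideal(R̂) ≤ (1/M) Σ_{k=1}^M ℓ(R̂_{u_k,i_k}, R_{u_k,i_k}) (sum over the sample S_MNAR) + ψ_{R̂,H}(P̂_MCAR, P̂_MNAR) + 2L ( 3 R_{P_MNAR,M}(H) + 2 R_{P_unif,M}(H) ) + 3Δ √( log(6/δ) / (2M) ). -/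

import Mathlib

open scoped Classical

/-- Rademacher complexity of a class `F` of functions `D → ℝ` for i.i.d. samples of
size `M` from the distribution `P` on `D = Fin m × Fin n`:
`R_{P,M}(F) = E_S E_σ [ sup_{f∈F} (1/M) Σ_k σ_k · f (S k) ]`, where the expectation
over samples is the explicit finite sum weighted by the product probabilities and the
Rademacher signs `σ : Fin M → Bool` (`true ↦ +1`, `false ↦ -1`) are uniform. -/
noncomputable def rademacher {m n : ℕ} (M : ℕ) (P : Fin m × Fin n → ℝ)
    (F : Set (Fin m × Fin n → ℝ)) : ℝ :=
  ∑ S : Fin M → Fin m × Fin n, (∏ k : Fin M, P (S k)) *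
    ∑ σ : Fin M → Bool, ((1 : ℝ) / 2) ^ M *
      sSup ((fun f => (1 / (M : ℝ)) *
        ∑ k : Fin M, (if σ k then (1 : ℝ) else -1) * f (S k)) '' F)

/-- Rademacher complexity of a class `H` of real `m × n` matrices, i.e. of the
associated function class `{ (u,i) ↦ R̂ u i : R̂ ∈ H }`. -/
noncomputable def matRademacher {m n : ℕ} (M : ℕ) (P : Fin m × Fin n → ℝ)
    (H : Set (Fin m → Fin n → ℝ)) : ℝ :=
  rademacher M P ((fun Rh : Fin m → Fin n → ℝ => fun p : Fin m × Fin n => Rh p.1 p.2) '' H)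

/-- Probability of an event `E` over an i.i.d. sample `S : Fin M → D` drawn from the
distribution `P` on `D` (the `M`-fold product distribution, as an explicit finite sum). -/
noncomputable def prSample {m n : ℕ} (M : ℕ) (P : Fin m × Fin n → ℝ)
    (E : (Fin M → Fin m × Fin n) → Prop) : ℝ :=
  ∑ S : Fin M → Fin m × Fin n, if E S then ∏ k : Fin M, P (S k) else 0

/-- Probability of an event `E` over two independent i.i.d. samples of size `M`,
drawn from the distributions `P` and `P'` on `D` respectively. -/
noncomputable def prSample2 {m n : ℕ} (M : ℕ) (P P' : Fin m × Fin n → ℝ)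
    (E : (Fin M → Fin m × Fin n) → (Fin M → Fin m × Fin n) → Prop) : ℝ :=
  ∑ S : Fin M → Fin m × Fin n, ∑ S' : Fin M → Fin m × Fin n,
    if E S S' then (∏ k : Fin M, P (S k)) * (∏ k : Fin M, P' (S' k)) else 0

/-- Empirical distribution of a sample `S : Fin M → D`:
`P̂_S (p) = (1/M) · #{k : S k = p}`. -/
noncomputable def empDist {m n M : ℕ} (S : Fin M → Fin m × Fin n) :
    Fin m × Fin n → ℝ :=
  fun p => (1 / (M : ℝ)) * ((Finset.univ.filter (fun k : Fin M => S k = p)).card : ℝ)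

/-- Weighted loss `L^ℓ(A, B | P) = Σ_{(u,i)∈D} P (u,i) · ℓ(A u i, B u i)`. -/
noncomputable def wLoss {m n : ℕ} (ℓ : ℝ → ℝ → ℝ) (P : Fin m × Fin n → ℝ)
    (A B : Fin m → Fin n → ℝ) : ℝ :=
  ∑ p : Fin m × Fin n, P p * ℓ (A p.1 p.2) (B p.1 p.2)

/-- Propensity matrix divergence (PMD):
`ψ_{R̂,H}(P, P') = sup_{R̂'∈H} { L^ℓ(R̂, R̂' | P) − L^ℓ(R̂, R̂' | P') }`. -/
noncomputable def PMD {m n : ℕ} (ℓ : ℝ → ℝ → ℝ) (H : Set (Fin m → Fin n → ℝ))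
    (Rhat : Fin m → Fin n → ℝ) (P P' : Fin m × Fin n → ℝ) : ℝ :=
  sSup ((fun R' => wLoss ℓ P Rhat R' - wLoss ℓ P' Rhat R') '' H)

theorem aux_sum_cons {D : Type*} [Fintype D] {M : ℕ} (F : (Fin (M+1) → D) → ℝ) :
    ∑ S, F S = ∑ x : D, ∑ S' : Fin M → D, F (Fin.cons x S') := by
  rw [← (Fin.consEquiv (fun _ : Fin (M+1) => D)).sum_comp, Fintype.sum_prod_type]
  rfl

theorem aux_w_one {D : Type*} [Fintype D] (P : D → ℝ) (hP : ∑ x, P x = 1) (M : ℕ) :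
    ∑ S : Fin M → D, ∏ k, P (S k) = 1 := by
  induction M with
  | zero => simp
  | succ M ih =>
    rw [aux_sum_cons]
    simp only [Fin.prod_univ_succ, Fin.cons_zero, Fin.cons_succ, ← Finset.mul_sum, ih, mul_one, hP]

/-- one-variable Hoeffding with crude constant -/
theorem aux_hoeff {D : Type*} [Fintype D] (P : D → ℝ) (h0 : ∀ x, 0 ≤ P x) (hP : ∑ x, P x = 1)
    (c : ℝ) (hc : 0 < c) (X : D → ℝ) (hX : ∀ x, |X x| ≤ c) (hm : ∑ x, P x * X x = 0) (s : ℝ) :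
    ∑ x, P x * Real.exp (s * X x) ≤ Real.exp (s ^ 2 * c ^ 2 / 2) := by
  have hpt : ∀ x, Real.exp (s * X x) ≤ Real.cosh (s * c) + X x / c * Real.sinh (s * c) := by
    intro x
    obtain ⟨h1, h2⟩ := abs_le.1 (hX x)
    have hq : |X x / c| ≤ 1 := by
      rw [abs_div, abs_of_pos hc, div_le_one hc]; exact hX x
    obtain ⟨q1, q2⟩ := abs_le.1 hq
    have ha : 0 ≤ (1 + X x / c) / 2 := by linarith
    have hb : 0 ≤ (1 - X x / c) / 2 := by linarith
    have := convexOn_exp.2 (Set.mem_univ (s * c)) (Set.mem_univ (-(s * c))) ha hb (by ring)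
    simp only [smul_eq_mul] at this
    have e : (1 + X x / c) / 2 * (s * c) + (1 - X x / c) / 2 * -(s * c) = s * X x := by
      field_simp; ring
    rw [e] at this
    rw [Real.cosh_eq, Real.sinh_eq]
    linarith
  calc ∑ x, P x * Real.exp (s * X x)
      ≤ ∑ x, P x * (Real.cosh (s * c) + X x / c * Real.sinh (s * c)) :=
        Finset.sum_le_sum fun x _ => mul_le_mul_of_nonneg_left (hpt x) (h0 x)
    _ = (∑ x, P x) * Real.cosh (s * c) + (∑ x, P x * X x) * (Real.sinh (s * c) / c) := by
        rw [Finset.sum_mul, Finset.sum_mul, ← Finset.sum_add_distrib]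
        exact Finset.sum_congr rfl fun x _ => by ring
    _ = Real.cosh (s * c) := by rw [hP, hm]; ring
    _ ≤ Real.exp ((s * c) ^ 2 / 2) := Real.cosh_le_exp_half_sq _
    _ = _ := by rw [mul_pow]

theorem aux_mcd {D : Type*} [Fintype D] (P : D → ℝ) (h0 : ∀ x, 0 ≤ P x) (hP : ∑ x, P x = 1)
    (c : ℝ) (hc : 0 < c) (s : ℝ) (M : ℕ) (g : (Fin M → D) → ℝ)
    (hg : ∀ S S' : Fin M → D, ∀ k, (∀ j, j ≠ k → S j = S' j) → |g S - g S'| ≤ c) :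
    ∑ S : Fin M → D, (∏ k, P (S k)) *
      Real.exp (s * (g S - ∑ T : Fin M → D, (∏ k, P (T k)) * g T))
      ≤ Real.exp (M * (s ^ 2 * c ^ 2 / 2)) := by
  induction M with
  | zero => simp
  | succ M ih =>
    set G : D → ℝ := fun x => ∑ T : Fin M → D, (∏ k, P (T k)) * g (Fin.cons x T) with hG
    have hw0 : ∀ T : Fin M → D, 0 ≤ ∏ k, P (T k) := fun T => Finset.prod_nonneg fun _ _ => h0 _
    have hw1 := aux_w_one P hP M
    have hmean : ∑ T : Fin (M+1) → D, (∏ k, P (T k)) * g T = ∑ x, P x * G x := by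
      rw [aux_sum_cons]
      simp only [Fin.prod_univ_succ, Fin.cons_zero, Fin.cons_succ, hG, Finset.mul_sum, mul_assoc]
    have hGd : ∀ x y, |G x - G y| ≤ c := by
      intro x y
      rw [hG]; simp only
      rw [← Finset.sum_sub_distrib]
      calc |∑ T : Fin M → D, ((∏ k, P (T k)) * g (Fin.cons x T) - (∏ k, P (T k)) * g (Fin.cons y T))|
          ≤ ∑ T : Fin M → D, (∏ k, P (T k)) * c := by
            refine (Finset.abs_sum_le_sum_abs _ _).trans (Finset.sum_le_sum fun T _ => ?_)
            rw [← mul_sub, abs_mul, abs_of_nonneg (hw0 T)]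
            refine mul_le_mul_of_nonneg_left (hg _ _ 0 ?_) (hw0 T)
            intro j hj
            obtain ⟨i, rfl⟩ := Fin.exists_succ_eq.2 hj
            simp
        _ = c := by rw [← Finset.sum_mul, hw1, one_mul]
    rw [hmean]
    set μ := ∑ x, P x * G x with hμ
    have hXb : ∀ x, |G x - μ| ≤ c := by
      intro x
      have : G x - μ = ∑ y, P y * (G x - G y) := by
        simp only [mul_sub, Finset.sum_sub_distrib, ← Finset.sum_mul, hP, one_mul, hμ]
      rw [this]
      calc _ ≤ ∑ y, P y * c := by
            refine (Finset.abs_sum_le_sum_abs _ _).trans (Finset.sum_le_sum fun T _ => ?_)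
            rw [abs_mul, abs_of_nonneg (h0 T)]
            exact mul_le_mul_of_nonneg_left (hGd _ _) (h0 T)
        _ = c := by rw [← Finset.sum_mul, hP, one_mul]
    have hXm : ∑ x, P x * (G x - μ) = 0 := by
      simp only [mul_sub, Finset.sum_sub_distrib, ← Finset.sum_mul, hP, one_mul]
      rw [← hμ]; ring
    have h1 := aux_hoeff P h0 hP c hc (fun x => G x - μ) hXb hXm s
    have h2 : ∀ x, ∑ T : Fin M → D, (∏ k, P (T k)) * Real.exp (s * (g (Fin.cons x T) - G x))
        ≤ Real.exp (M * (s ^ 2 * c ^ 2 / 2)) := by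
      intro x
      refine ih (fun T => g (Fin.cons x T)) ?_
      intro S S' k hk
      refine hg _ _ k.succ ?_
      intro j hj
      induction j using Fin.cases with
      | zero => simp
      | succ j => simpa using hk j (fun h => hj (by rw [h]))
    rw [aux_sum_cons]
    simp only [Fin.prod_univ_succ, Fin.cons_zero, Fin.cons_succ]
    calc ∑ x, ∑ T : Fin M → D, P x * (∏ k, P (T k)) * Real.exp (s * (g (Fin.cons x T) - μ))
        = ∑ x, P x * Real.exp (s * (G x - μ)) *
          ∑ T : Fin M → D, (∏ k, P (T k)) * Real.exp (s * (g (Fin.cons x T) - G x)) := by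
          refine Finset.sum_congr rfl fun x _ => ?_
          rw [Finset.mul_sum]
          refine Finset.sum_congr rfl fun T _ => ?_
          have : s * (g (Fin.cons x T) - μ) = s * (G x - μ) + s * (g (Fin.cons x T) - G x) := by ring
          rw [this, Real.exp_add]; ring
      _ ≤ ∑ x, P x * Real.exp (s * (G x - μ)) * Real.exp (M * (s ^ 2 * c ^ 2 / 2)) :=
          Finset.sum_le_sum fun x _ => mul_le_mul_of_nonneg_left (h2 x)
            (mul_nonneg (h0 x) (Real.exp_pos _).le)
      _ ≤ Real.exp (s ^ 2 * c ^ 2 / 2) * Real.exp (M * (s ^ 2 * c ^ 2 / 2)) := by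
          rw [← Finset.sum_mul]
          exact mul_le_mul_of_nonneg_right h1 (Real.exp_pos _).le
      _ = _ := by rw [← Real.exp_add]; congr 1; push_cast; ring

theorem aux_bdd {ι : Type*} (C : ℝ) (f : ι → ℝ) (h : ∀ i, |f i| ≤ C) : BddAbove (Set.range f) :=
  ⟨C, by rintro _ ⟨i, rfl⟩; exact (abs_le.1 (h i)).2⟩

def auxSg (b : Bool) : ℝ := if b then 1 else -1

theorem auxSg_abs (b : Bool) : |auxSg b| = 1 := by cases b <;> simp [auxSg]

theorem aux_sum_abs {ι : Type*} {M : ℕ} (σ : Fin M → Bool) (v : Fin M → ι → ℝ) (C : ℝ)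
    (h : ∀ k i, |v k i| ≤ C) (i : ι) : |∑ k, auxSg (σ k) * v k i| ≤ M * C := by
  refine (Finset.abs_sum_le_sum_abs _ _).trans ?_
  refine (Finset.sum_le_sum (g := fun _ => C) fun k _ => ?_).trans (by simp)
  rw [abs_mul, auxSg_abs, one_mul]; exact h k i

theorem aux_contr {ι : Type*} [Nonempty ι] (C : ℝ) (M : ℕ) (u v : Fin M → ι → ℝ)
    (hu : ∀ k i, |u k i| ≤ C) (hv : ∀ k i, |v k i| ≤ C)
    (huv : ∀ k i j, |u k i - u k j| ≤ |v k i - v k j|)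
    (a : ι → ℝ) (A : ℝ) (ha : ∀ i, |a i| ≤ A) :
    ∑ σ : Fin M → Bool, ⨆ i, (a i + ∑ k, auxSg (σ k) * u k i) ≤
      ∑ σ : Fin M → Bool, ⨆ i, (a i + ∑ k, auxSg (σ k) * v k i) := by
  induction M generalizing a A with
  | zero => simp
  | succ M ih =>
    rw [aux_sum_cons, aux_sum_cons]
    simp only [Fin.sum_univ_succ, Fin.cons_zero, Fin.cons_succ, ← add_assoc]
    calc _ ≤ ∑ b : Bool, ∑ σ : Fin M → Bool,
          ⨆ i, (a i + auxSg b * u 0 i + ∑ k, auxSg (σ k) * v k.succ i) := by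
          refine Finset.sum_le_sum fun b _ => ?_
          refine ih (fun k => u k.succ) (fun k => v k.succ) (fun k => hu _) (fun k => hv _)
            (fun k => huv _) (fun i => a i + auxSg b * u 0 i) (A + C) ?_
          intro i
          refine (abs_add_le _ _).trans (add_le_add (ha i) ?_)
          rw [abs_mul, auxSg_abs, one_mul]; exact hu 0 i
      _ ≤ _ := by
          rw [Finset.sum_comm]
          conv_rhs => rw [Finset.sum_comm]
          refine Finset.sum_le_sum fun σ _ => ?_
          simp only [Fintype.sum_bool]
          set b : ι → ℝ := fun i => ∑ k, auxSg (σ k) * v k.succ i with hb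
          have hbb : ∀ i, |b i| ≤ M * C := aux_sum_abs σ (fun k => v k.succ) C (fun k => hv _)
          have e1 : auxSg true = 1 := rfl
          have e2 : auxSg false = -1 := rfl
          rw [e1, e2]
          have B1 : BddAbove (Set.range fun i => a i + 1 * v 0 i + b i) := by
            refine aux_bdd (A + C + M * C) _ fun i => ?_
            refine (abs_add_le _ _).trans (add_le_add ((abs_add_le _ _).trans (add_le_add (ha i) ?_)) (hbb i))
            rw [one_mul]; exact hv 0 i
          have B2 : BddAbove (Set.range fun i => a i + -1 * v 0 i + b i) := by
            refine aux_bdd (A + C + M * C) _ fun i => ?_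
            refine (abs_add_le _ _).trans (add_le_add ((abs_add_le _ _).trans (add_le_add (ha i) ?_)) (hbb i))
            rw [neg_one_mul, abs_neg]; exact hv 0 i
          set R1 := ⨆ i, (a i + 1 * v 0 i + b i)
          set R2 := ⨆ i, (a i + -1 * v 0 i + b i)
          have key : ∀ i j, (a i + 1 * u 0 i + b i) + (a j + -1 * u 0 j + b j) ≤ R1 + R2 := by
            intro i j
            have a1 := le_ciSup B1 i
            have a2 := le_ciSup B2 j
            have a3 := le_ciSup B1 j
            have a4 := le_ciSup B2 i
            have h1 := (le_abs_self _).trans (huv 0 i j)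
            rcases abs_cases (v 0 i - v 0 j) with ⟨h, _⟩ | ⟨h, _⟩ <;> rw [h] at h1 <;> linarith
          have s1 : ∀ j, (⨆ i, (a i + 1 * u 0 i + b i)) ≤ R1 + R2 - (a j + -1 * u 0 j + b j) :=
            fun j => ciSup_le fun i => by linarith [key i j]
          have s2 : (⨆ j, (a j + -1 * u 0 j + b j)) ≤ R1 + R2 - ⨆ i, (a i + 1 * u 0 i + b i) :=
            ciSup_le fun j => by linarith [s1 j]
          linarith

/-- symmetrization -/
theorem aux_symm {ι D : Type*} [Nonempty ι] [Fintype D] (P : D → ℝ) (h0 : ∀ x, 0 ≤ P x)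
    (hP : ∑ x, P x = 1) (C : ℝ) (f : ι → D → ℝ) (hf : ∀ i x, |f i x| ≤ C) (M : ℕ) :
    ∑ S : Fin M → D, (∏ k, P (S k)) * (⨆ i, (M * ∑ x, P x * f i x - ∑ k, f i (S k))) ≤
    2 * ∑ S : Fin M → D, (∏ k, P (S k)) * ∑ σ : Fin M → Bool, ((1 : ℝ) / 2) ^ M *
      ⨆ i, ∑ k, auxSg (σ k) * f i (S k) := by
  set w : (Fin M → D) → ℝ := fun S => ∏ k, P (S k) with hw
  have hw0 : ∀ T, 0 ≤ w T := fun T => Finset.prod_nonneg fun _ _ => h0 _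
  have hw1 : ∑ T, w T = 1 := aux_w_one P hP M
  have hmean : ∀ i, ∑ T, w T * ∑ k, f i (T k) = M * ∑ x, P x * f i x := by
    intro i
    clear hf
    simp only [hw]
    clear hw hw0 hw1 w
    induction M with
    | zero => simp
    | succ M ih =>
      rw [aux_sum_cons]
      simp only [Fin.prod_univ_succ, Fin.sum_univ_succ, Fin.cons_zero, Fin.cons_succ]
      have : ∀ x : D, ∑ T : Fin M → D, P x * (∏ k, P (T k)) * (f i x + ∑ k, f i (T k)) =
          P x * f i x + P x * (M * ∑ x, P x * f i x) := by
        intro x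
        rw [← ih]
        have h := aux_w_one P hP M
        calc _ = P x * f i x * (∑ T : Fin M → D, ∏ k, P (T k)) +
              P x * ∑ T : Fin M → D, (∏ k, P (T k)) * ∑ k, f i (T k) := by
              rw [Finset.mul_sum, Finset.mul_sum, ← Finset.sum_add_distrib]
              exact Finset.sum_congr rfl fun T _ => by ring
          _ = _ := by rw [h, mul_one]
      simp only [this, Finset.sum_add_distrib, ← Finset.sum_mul, hP]
      push_cast; ring
  have hab : ∀ (T : Fin M → D) (σ : Fin M → Bool) i, |∑ k, auxSg (σ k) * f i (T k)| ≤ M * C :=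
    fun T σ i => aux_sum_abs σ (fun k i => f i (T k)) C (fun k i => hf i _) i
  have hB : ∀ (T : Fin M → D) (σ : Fin M → Bool),
      BddAbove (Set.range fun i => ∑ k, auxSg (σ k) * f i (T k)) :=
    fun T σ => aux_bdd (M * C) _ fun i => hab T σ i
  have hB2 : ∀ (T S : Fin M → D) (σ : Fin M → Bool),
      BddAbove (Set.range fun i => ∑ k, auxSg (σ k) * (f i (T k) - f i (S k))) := by
    intro T S σ
    refine aux_bdd (M * C + M * C) _ fun i => ?_
    simp only [mul_sub, Finset.sum_sub_distrib]
    exact (abs_sub _ _).trans (add_le_add (hab T σ i) (hab S σ i))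
  let Φ : (Fin M → Bool) → (Fin M → D) → (Fin M → D) → ℝ := fun σ S T =>
    ⨆ i, ∑ k, auxSg (σ k) * (f i (T k) - f i (S k))
  -- ghost sample
  have step1 : ∑ S, w S * (⨆ i, (M * ∑ x, P x * f i x - ∑ k, f i (S k))) ≤
      ∑ S, ∑ T, w S * w T * Φ (fun _ => true) S T := by
    refine Finset.sum_le_sum fun S _ => ?_
    simp only [mul_assoc, ← Finset.mul_sum]
    refine mul_le_mul_of_nonneg_left (ciSup_le fun i => ?_) (hw0 S)
    rw [← hmean i]
    calc _ = ∑ T, w T * ∑ k, auxSg true * (f i (T k) - f i (S k)) := by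
            have e1 : auxSg true = 1 := rfl
            simp only [e1, one_mul, Finset.sum_sub_distrib, mul_sub, ← Finset.sum_mul, hw1]
      _ ≤ _ := Finset.sum_le_sum fun T _ =>
            mul_le_mul_of_nonneg_left (le_ciSup (hB2 T S fun _ => true) i) (hw0 T)
  have step2 : ∀ σ, ∑ S, ∑ T, w S * w T * Φ (fun _ => true) S T =
      ∑ S, ∑ T, w S * w T * Φ σ S T := by
    intro σ
    let sw : (Fin M → D) × (Fin M → D) → (Fin M → D) × (Fin M → D) := fun p =>
      (fun k => if σ k then p.1 k else p.2 k, fun k => if σ k then p.2 k else p.1 k)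
    have hsw : Function.Involutive sw := by
      intro p
      refine Prod.ext ?_ ?_ <;> funext k <;> simp only [sw] <;> cases σ k <;> simp
    rw [← Fintype.sum_prod_type', ← Fintype.sum_prod_type', ← Equiv.sum_comp hsw.toPerm]
    refine Finset.sum_congr rfl fun p _ => ?_
    obtain ⟨S, T⟩ := p
    simp only [Function.Involutive.coe_toPerm]
    congr 1
    · simp only [hw, sw, ← Finset.prod_mul_distrib]
      refine Finset.prod_congr rfl fun k _ => ?_
      cases σ k <;> simp [mul_comm]
    · simp only [Φ, sw]
      congr 1; funext i
      refine Finset.sum_congr rfl fun k _ => ?_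
      cases σ k <;> simp [auxSg]
  have hcard : ∑ σ : Fin M → Bool, ((1 : ℝ) / 2) ^ M = 1 := by
    simp
  let Q : (Fin M → Bool) → (Fin M → D) → ℝ := fun σ T => ⨆ i, ∑ k, auxSg (σ k) * f i (T k)
  have step3 : ∀ σ S T, Φ σ S T ≤ Q σ T + Q (fun k => !σ k) S := by
    intro σ S T
    refine ciSup_le fun i => ?_
    refine le_trans (le_of_eq ?_) (add_le_add (le_ciSup (hB T σ) i) (le_ciSup (hB S fun k => !σ k) i))
    rw [← Finset.sum_add_distrib]
    refine Finset.sum_congr rfl fun k _ => ?_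
    cases σ k <;> simp [auxSg] <;> ring
  have step4 : ∀ σ, ∑ S, ∑ T, w S * w T * Φ σ S T ≤
      ∑ T, w T * Q σ T + ∑ S, w S * Q (fun k => !σ k) S := by
    intro σ
    calc _ ≤ ∑ S, ∑ T, w S * w T * (Q σ T + Q (fun k => !σ k) S) :=
          Finset.sum_le_sum fun S _ => Finset.sum_le_sum fun T _ =>
            mul_le_mul_of_nonneg_left (step3 σ S T) (mul_nonneg (hw0 S) (hw0 T))
      _ = ∑ S, (w S * (∑ T, w T * Q σ T) + (w S * Q (fun k => !σ k) S) * ∑ T, w T) := by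
          refine Finset.sum_congr rfl fun S _ => ?_
          rw [Finset.mul_sum, Finset.mul_sum, ← Finset.sum_add_distrib]
          exact Finset.sum_congr rfl fun T _ => by ring
      _ = _ := by rw [Finset.sum_add_distrib, ← Finset.sum_mul, hw1]; simp
  have hneg : ∑ σ : Fin M → Bool, ((1 : ℝ) / 2) ^ M * ∑ S, w S * Q (fun k => !σ k) S =
      ∑ σ : Fin M → Bool, ((1 : ℝ) / 2) ^ M * ∑ S, w S * Q σ S := by
    have hinv : Function.Involutive (fun σ : Fin M → Bool => fun k => !σ k) := by
      intro σ; funext k; simp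
    exact Equiv.sum_comp hinv.toPerm (fun σ => ((1 : ℝ) / 2) ^ M * ∑ S, w S * Q σ S)
  have hfin : ∑ S, w S * ∑ σ : Fin M → Bool, ((1 : ℝ) / 2) ^ M * Q σ S =
      ∑ σ : Fin M → Bool, ((1 : ℝ) / 2) ^ M * ∑ S, w S * Q σ S := by
    simp only [Finset.mul_sum]
    rw [Finset.sum_comm]
    exact Finset.sum_congr rfl fun σ _ => Finset.sum_congr rfl fun S _ => by ring
  calc _ ≤ _ := step1
    _ = ∑ σ : Fin M → Bool, ((1 : ℝ) / 2) ^ M * ∑ S, ∑ T, w S * w T * Φ (fun _ => true) S T := by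
        rw [← Finset.sum_mul, hcard, one_mul]
    _ ≤ ∑ σ : Fin M → Bool, ((1 : ℝ) / 2) ^ M *
          (∑ T, w T * Q σ T + ∑ S, w S * Q (fun k => !σ k) S) := by
        refine Finset.sum_le_sum fun σ _ => mul_le_mul_of_nonneg_left ?_ (by positivity)
        rw [step2 σ]; exact step4 σ
    _ = 2 * ∑ σ : Fin M → Bool, ((1 : ℝ) / 2) ^ M * ∑ S, w S * Q σ S := by
        simp only [mul_add, Finset.sum_add_distrib]
        rw [hneg]; ring
    _ = _ := by rw [← hfin]


theorem aux_rad {m n M : ℕ} (hM : 1 ≤ M) (P : Fin m × Fin n → ℝ) (H : Set (Fin m → Fin n → ℝ)) :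
    M * matRademacher M P H = ∑ S : Fin M → Fin m × Fin n, (∏ k, P (S k)) *
      ∑ σ : Fin M → Bool, ((1 : ℝ) / 2) ^ M *
        ⨆ A : H, ∑ k, auxSg (σ k) * A.1 (S k).1 (S k).2 := by
  have hM' : (M : ℝ) ≠ 0 := by positivity
  unfold matRademacher rademacher
  rw [Finset.mul_sum]
  refine Finset.sum_congr rfl fun S _ => ?_
  rw [mul_left_comm]
  congr 1
  rw [Finset.mul_sum]
  refine Finset.sum_congr rfl fun σ _ => ?_
  rw [mul_left_comm]
  congr 1
  rw [Set.image_image, sSup_image', ← Real.mul_iSup_of_nonneg (by positivity), ← mul_assoc,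
    mul_one_div_cancel hM', one_mul]
  rfl

theorem aux_rad_nonneg {m n M : ℕ} (hM : 1 ≤ M) (P : Fin m × Fin n → ℝ) (h0 : ∀ x, 0 ≤ P x)
    (H : Set (Fin m → Fin n → ℝ)) (hH : H.Nonempty)
    (C : ℝ) (hC : ∀ A ∈ H, ∀ u i, |A u i| ≤ C) : 0 ≤ matRademacher M P H := by
  have : Nonempty H := hH.to_subtype
  have hMp : (0 : ℝ) < M := by positivity
  have : 0 ≤ M * matRademacher M P H := by
    rw [aux_rad hM]
    refine Finset.sum_nonneg fun S _ => mul_nonneg (Finset.prod_nonneg fun _ _ => h0 _) ?_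
    rw [← Finset.mul_sum]
    refine mul_nonneg (by positivity) ?_
    have hv : ∀ (k : Fin M) (A : H), |A.1 (S k).1 (S k).2| ≤ C := fun k A => hC A.1 A.2 _ _
    have := aux_contr C M (fun _ (_ : H) => 0) (fun k (A : H) => A.1 (S k).1 (S k).2)
      (fun k A => by simpa using (abs_nonneg _).trans (hv k A)) hv (fun k i j => by simp)
      (fun _ => 0) 0 (by simp)
    simpa using this
  exact nonneg_of_mul_nonneg_right this hMp

theorem aux_lip_rad {m n M : ℕ} (hM : 1 ≤ M) (P : Fin m × Fin n → ℝ) (h0 : ∀ x, 0 ≤ P x)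
    (H : Set (Fin m → Fin n → ℝ)) (hH : H.Nonempty)
    (C : ℝ) (hC : ∀ A ∈ H, ∀ u i, |A u i| ≤ C) (L : ℝ) (hL : 0 < L) (B : ℝ)
    (f : H → Fin m × Fin n → ℝ) (hf : ∀ A x, |f A x| ≤ B)
    (hlip : ∀ A A' x, |f A x - f A' x| ≤ L * |A.1 x.1 x.2 - A'.1 x.1 x.2|) :
    ∑ S : Fin M → Fin m × Fin n, (∏ k, P (S k)) * ∑ σ : Fin M → Bool, ((1 : ℝ) / 2) ^ M *
      ⨆ A : H, ∑ k, auxSg (σ k) * f A (S k) ≤ L * (M * matRademacher M P H) := by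
  have : Nonempty H := hH.to_subtype
  rw [aux_rad hM, Finset.mul_sum]
  refine Finset.sum_le_sum fun S _ => ?_
  rw [mul_left_comm]
  refine mul_le_mul_of_nonneg_left ?_ (Finset.prod_nonneg fun _ _ => h0 _)
  rw [← Finset.mul_sum, ← Finset.mul_sum, mul_left_comm]
  refine mul_le_mul_of_nonneg_left ?_ (by positivity)
  have := aux_contr (max B (L * C)) M (fun k A => f A (S k))
    (fun k (A : H) => L * A.1 (S k).1 (S k).2)
    (fun k A => (hf _ _).trans (le_max_left _ _))
    (fun k A => by
      rw [abs_mul, abs_of_pos hL]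
      exact (mul_le_mul_of_nonneg_left (hC A.1 A.2 _ _) hL.le).trans (le_max_right _ _))
    (fun k A A' => by
      rw [← mul_sub, abs_mul, abs_of_pos hL]; exact hlip _ _ _)
    (fun _ => 0) 0 (by simp)
  simp only [zero_add] at this
  refine this.trans (le_of_eq ?_)
  rw [Finset.mul_sum]
  refine Finset.sum_congr rfl fun σ _ => ?_
  rw [Real.mul_iSup_of_nonneg hL.le]
  congr 1; funext A
  rw [Finset.mul_sum]
  exact Finset.sum_congr rfl fun k _ => by ring

theorem aux_empLoss {m n M : ℕ} (ℓ : ℝ → ℝ → ℝ) (S : Fin M → Fin m × Fin n)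
    (A B : Fin m → Fin n → ℝ) :
    wLoss ℓ (empDist S) A B = (1 / (M : ℝ)) * ∑ k, ℓ (A (S k).1 (S k).2) (B (S k).1 (S k).2) := by
  unfold wLoss empDist
  simp only [mul_assoc, ← Finset.mul_sum]
  congr 1
  rw [← Finset.sum_fiberwise (s := Finset.univ) (g := S)]
  refine Finset.sum_congr rfl fun p _ => ?_
  rw [← nsmul_eq_mul, ← Finset.sum_const]
  refine Finset.sum_congr rfl fun k hk => ?_
  rw [(Finset.mem_filter.1 hk).2]

/-- **Propensity-independent generalization error bound (Theorem 1).**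
Suppose `ℓ` is `L`-Lipschitz in each argument, `H` is a nonempty, uniformly bounded
class of real `m × n` matrices containing the true rating matrix `R`, `P_unif` is
the uniform (MCAR) distribution on `D` and `P_MNAR` is any probability distribution
on `D`.  If `S_MCAR` and `S_MNAR` are independent i.i.d. samples of size `M` from
`P_unif` and `P_MNAR` with empirical distributions `P̂_MCAR`, `P̂_MNAR`, then for
every `δ ∈ (0, 1)`, with probability at least `1 − δ`, for every `R̂ ∈ H`:
`L^ℓ_ideal(R̂) ≤ (1/M) Σ_k ℓ(R̂ (S_MNAR k), R (S_MNAR k))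
  + ψ_{R̂,H}(P̂_MCAR, P̂_MNAR)
  + 2L (3 R_{P_MNAR,M}(H) + 2 R_{P_unif,M}(H)) + 3Δ √(log(6/δ)/(2M))`. -/
theorem propensity_independent_generalization_bound
    (m n : ℕ) (hm : 1 ≤ m) (hn : 1 ≤ n)
    (Δ : ℝ) (hΔ : 0 < Δ)
    (ℓ : ℝ → ℝ → ℝ) (hℓ : ∀ a b : ℝ, ℓ a b ∈ Set.Icc (0 : ℝ) Δ)
    (L : ℝ) (hL : 0 < L)
    (hLip1 : ∀ a a' b : ℝ, |ℓ a b - ℓ a' b| ≤ L * |a - a'|)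
    (hLip2 : ∀ a b b' : ℝ, |ℓ a b - ℓ a b'| ≤ L * |b - b'|)
    (R : Fin m → Fin n → ℝ)
    (H : Set (Fin m → Fin n → ℝ)) (hH : H.Nonempty)
    (hHb : ∃ C : ℝ, ∀ Rh ∈ H, ∀ u : Fin m, ∀ i : Fin n, |Rh u i| ≤ C)
    (hR : R ∈ H)
    (Pmnar : Fin m × Fin n → ℝ) (hPm0 : ∀ p, 0 ≤ Pmnar p)
    (hPm1 : ∑ p : Fin m × Fin n, Pmnar p = 1)
    (M : ℕ) (hM : 1 ≤ M)
    (δ : ℝ) (hδ : δ ∈ Set.Ioo (0 : ℝ) 1) :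
    1 - δ ≤ prSample2 M (fun _ : Fin m × Fin n => 1 / (m * n : ℝ)) Pmnar
      (fun Smcar Smnar =>
        ∀ Rhat ∈ H,
          (1 / (m * n : ℝ)) *
              (∑ p : Fin m × Fin n, ℓ (Rhat p.1 p.2) (R p.1 p.2)) ≤
            (1 / (M : ℝ)) *
                (∑ k : Fin M,
                  ℓ (Rhat (Smnar k).1 (Smnar k).2) (R (Smnar k).1 (Smnar k).2)) +
              PMD ℓ H Rhat (empDist Smcar) (empDist Smnar) +
              2 * L * (3 * matRademacher M Pmnar H +
                2 * matRademacher M (fun _ : Fin m × Fin n => 1 / (m * n : ℝ)) H) +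
              3 * Δ * Real.sqrt (Real.log (6 / δ) / (2 * M))) := by
  obtain ⟨C, hC⟩ := hHb
  obtain ⟨hδ0, hδ1⟩ := hδ
  have : Nonempty H := hH.to_subtype
  set U : Fin m × Fin n → ℝ := fun _ => 1 / (m * n : ℝ) with hU
  have hMp : (0 : ℝ) < M := by positivity
  have hU0 : ∀ x, 0 ≤ U x := fun x => by simp only [hU]; positivity
  have hU1 : ∑ x, U x = 1 := by
    have : (m : ℝ) ≠ 0 := by positivity
    have : (n : ℝ) ≠ 0 := by positivity
    simp only [hU, Finset.sum_const, Finset.card_univ, Fintype.card_prod, Fintype.card_fin,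
      nsmul_eq_mul]
    push_cast
    field_simp
  let f : H → Fin m × Fin n → ℝ := fun A p => ℓ (A.1 p.1 p.2) (R p.1 p.2)
  have hf0 : ∀ A x, 0 ≤ f A x := fun A x => (hℓ _ _).1
  have hf1 : ∀ A x, f A x ≤ Δ := fun A x => (hℓ _ _).2
  have hf : ∀ A x, |f A x| ≤ Δ := fun A x => abs_le.2 ⟨by linarith [hf0 A x], hf1 A x⟩
  let G : (Fin M → Fin m × Fin n) → ℝ := fun S => ⨆ A, (M * ∑ x, U x * f A x - ∑ k, f A (S k))
  have hGb : ∀ S : Fin M → Fin m × Fin n, BddAbove (Set.range fun A => M * ∑ x, U x * f A x - ∑ k, f A (S k)) := by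
    intro S
    refine ⟨M * Δ, ?_⟩
    rintro _ ⟨A, rfl⟩
    have h1 : ∑ x, U x * f A x ≤ Δ := by
      calc _ ≤ ∑ x, U x * Δ := Finset.sum_le_sum fun x _ =>
            mul_le_mul_of_nonneg_left (hf1 A x) (hU0 x)
        _ = Δ := by rw [← Finset.sum_mul, hU1, one_mul]
    have h2 : 0 ≤ ∑ k, f A (S k) := Finset.sum_nonneg fun k _ => hf0 _ _
    have h3 := mul_le_mul_of_nonneg_left h1 hMp.le
    simp only
    linarith
  have hGd1 : ∀ S S' : Fin M → Fin m × Fin n, ∀ k, (∀ j, j ≠ k → S j = S' j) → G S ≤ G S' + Δ := by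
    intro S S' k hk
    refine ciSup_le fun A => ?_
    have h1 := le_ciSup (hGb S') A
    have h2 : ∑ j, f A (S' j) - ∑ j, f A (S j) = f A (S' k) - f A (S k) := by
      rw [← Finset.sum_sub_distrib]
      refine Finset.sum_eq_single k (fun j _ hj => ?_) (by simp)
      rw [hk j hj, sub_self]
    have h3 := hf0 A (S k)
    have h4 := hf1 A (S' k)
    change _ ≤ G S' at h1
    linarith
  have hGd : ∀ S S' : Fin M → Fin m × Fin n, ∀ k, (∀ j, j ≠ k → S j = S' j) →
      |G S - G S'| ≤ Δ := by
    intro S S' k hk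
    have a1 := hGd1 S S' k hk
    have a2 := hGd1 S' S k (fun j hj => (hk j hj).symm)
    exact abs_le.2 ⟨by linarith, by linarith⟩
  set w : (Fin M → Fin m × Fin n) → ℝ := fun S => ∏ k, U (S k) with hw
  have hw0 : ∀ S, 0 ≤ w S := fun S => Finset.prod_nonneg fun k _ => hU0 (S k)
  have hw1 : ∑ S, w S = 1 := aux_w_one U hU1 M
  set w' : (Fin M → Fin m × Fin n) → ℝ := fun S => ∏ k, Pmnar (S k) with hw'
  have hw'0 : ∀ S, 0 ≤ w' S := fun S => Finset.prod_nonneg fun _ _ => hPm0 _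
  have hw'1 : ∑ S, w' S = 1 := aux_w_one Pmnar hPm1 M
  set EG := ∑ S, w S * G S with hEG
  have hEGle : EG ≤ 2 * (L * (M * matRademacher M U H)) := by
    refine (aux_symm U hU0 hU1 Δ f hf M).trans ?_
    exact mul_le_mul_of_nonneg_left (aux_lip_rad hM U hU0 H hH C hC L hL Δ f hf
      (fun A A' x => hLip1 _ _ _)) (by norm_num)
  have hr1 := aux_rad_nonneg hM U hU0 H hH C hC
  have hr2 := aux_rad_nonneg hM Pmnar hPm0 H hH C hC
  have hlog : 0 < Real.log (6 / δ) := Real.log_pos (by rw [lt_div_iff₀ hδ0]; linarith)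
  set q := Real.sqrt (Real.log (6 / δ) / (2 * M)) with hq
  have hq2 : q ^ 2 = Real.log (6 / δ) / (2 * M) := Real.sq_sqrt (by positivity)
  have hq0 : 0 ≤ q := Real.sqrt_nonneg _
  -- tail bound
  have htail : ∑ S, (if G S - EG ≤ M * (3 * Δ * q) then 0 else w S) ≤ δ := by
    set s := 3 * q / Δ with hs
    have hs0 : 0 ≤ s := by positivity
    have hmc := aux_mcd U hU0 hU1 Δ hΔ s M G hGd
    calc _ ≤ ∑ S, w S * Real.exp (s * (G S - EG)) * Real.exp (- (s * (M * (3 * Δ * q)))) := by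
          refine Finset.sum_le_sum fun S _ => ?_
          rw [mul_assoc (w S), ← Real.exp_add]
          split_ifs with h
          · exact mul_nonneg (hw0 S) (Real.exp_pos _).le
          · have : 0 ≤ s * (G S - EG) + -(s * (M * (3 * Δ * q))) := by
              have := mul_le_mul_of_nonneg_left (not_le.1 h).le hs0
              linarith
            have h1 : 1 ≤ Real.exp (s * (G S - EG) + -(s * (M * (3 * Δ * q)))) :=
              Real.one_le_exp this
            exact le_mul_of_one_le_right (hw0 S) h1
      _ ≤ Real.exp (M * (s ^ 2 * Δ ^ 2 / 2)) * Real.exp (- (s * (M * (3 * Δ * q)))) := by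
          rw [← Finset.sum_mul]
          exact mul_le_mul_of_nonneg_right hmc (Real.exp_pos _).le
      _ = Real.exp (- (9 / 4 * Real.log (6 / δ))) := by
          rw [← Real.exp_add]
          congr 1
          have : M * (s ^ 2 * Δ ^ 2 / 2) + -(s * (M * (3 * Δ * q))) = - (9 / 2 * M * q ^ 2) := by
            rw [hs]; field_simp; ring
          rw [this, hq2]; field_simp; ring
      _ ≤ Real.exp (- Real.log (6 / δ)) := Real.exp_le_exp.2 (by linarith)
      _ = δ / 6 := by rw [Real.exp_neg, Real.exp_log (by positivity), inv_div]
      _ ≤ δ := by linarith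
  have hgood : ∀ S S' : Fin M → Fin m × Fin n, G S - EG ≤ M * (3 * Δ * q) → ∀ Rhat ∈ H,
          (1 / (m * n : ℝ)) *
              (∑ p : Fin m × Fin n, ℓ (Rhat p.1 p.2) (R p.1 p.2)) ≤
            (1 / (M : ℝ)) *
                (∑ k : Fin M,
                  ℓ (Rhat (S' k).1 (S' k).2) (R (S' k).1 (S' k).2)) +
              PMD ℓ H Rhat (empDist S) (empDist S') +
              2 * L * (3 * matRademacher M Pmnar H +
                2 * matRademacher M U H) +
              3 * Δ * q := by
    intro S S' hS A hA
    have hpmd : wLoss ℓ (empDist S) A R - wLoss ℓ (empDist S') A R ≤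
        PMD ℓ H A (empDist S) (empDist S') := by
      unfold PMD
      refine le_csSup ⟨Δ, ?_⟩ ⟨R, hR, rfl⟩
      rintro _ ⟨B, hB, rfl⟩
      simp only [aux_empLoss]
      have h1 : (1 / (M : ℝ)) * ∑ k, ℓ (A (S k).1 (S k).2) (B (S k).1 (S k).2) ≤ Δ := by
        have : ∑ k, ℓ (A (S k).1 (S k).2) (B (S k).1 (S k).2) ≤ M * Δ :=
          (Finset.sum_le_sum (g := fun _ => Δ) fun k _ => (hℓ _ _).2).trans (by simp)
        rw [one_div, inv_mul_le_iff₀ hMp]; exact this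
      have h2 : 0 ≤ (1 / (M : ℝ)) * ∑ k, ℓ (A (S' k).1 (S' k).2) (B (S' k).1 (S' k).2) :=
        mul_nonneg (by positivity) (Finset.sum_nonneg fun k _ => (hℓ _ _).1)
      linarith
    rw [aux_empLoss, aux_empLoss] at hpmd
    have h1 : M * ∑ x, U x * f ⟨A, hA⟩ x - ∑ k, f ⟨A, hA⟩ (S k) ≤ G S := le_ciSup (hGb S) ⟨A, hA⟩
    simp only [f, hU, ← Finset.mul_sum] at h1
    have h2 : M * ((1 / (m * n : ℝ)) * ∑ p : Fin m × Fin n, ℓ (A p.1 p.2) (R p.1 p.2)) ≤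
        M * ((1 / (M : ℝ)) * (∑ k, ℓ (A (S k).1 (S k).2) (R (S k).1 (S k).2)) +
          2 * L * matRademacher M U H + 3 * Δ * q) := by
      have : M * ((1 / (M : ℝ)) * (∑ k, ℓ (A (S k).1 (S k).2) (R (S k).1 (S k).2)))
        = ∑ k, ℓ (A (S k).1 (S k).2) (R (S k).1 (S k).2) := by field_simp
      rw [mul_add, mul_add, this]
      linarith
    have h3 := le_of_mul_le_mul_left h2 hMp
    have h4 := mul_nonneg hL.le hr1
    have h5 := mul_nonneg hL.le hr2
    linarith
  unfold prSample2
  calc 1 - δ ≤ ∑ S, (if G S - EG ≤ M * (3 * Δ * q) then w S else 0) := by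
        have : ∑ S, (if G S - EG ≤ M * (3 * Δ * q) then w S else 0) +
            ∑ S, (if G S - EG ≤ M * (3 * Δ * q) then 0 else w S) = 1 := by
          rw [← Finset.sum_add_distrib, ← hw1]
          exact Finset.sum_congr rfl fun S _ => by split_ifs <;> simp
        linarith
    _ = ∑ S, ∑ S', (if G S - EG ≤ M * (3 * Δ * q) then w S * w' S' else 0) := by
        refine Finset.sum_congr rfl fun S _ => ?_
        split_ifs
        · rw [← Finset.mul_sum, hw'1, mul_one]
        · simp
    _ ≤ _ := by
        refine Finset.sum_le_sum fun S _ => Finset.sum_le_sum fun S' _ => ?_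
        by_cases h : G S - EG ≤ M * (3 * Δ * q)
        · rw [if_pos h, if_pos (hgood S S' h)]
        · rw [if_neg h]
          split_ifs
          · exact mul_nonneg (hw0 S) (hw'0 S')
          · exact le_rfl
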